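/- arXiv:2305.08427 — 2 statements merged into one kernel-verified Lean document; each statement's English description precedes it below -/
import Mathlib

section
/- Fix 0 ≤ q₀ < q̃₀ and let (q, p), respectively (q̃, p̃), be the global solution of (HS) with initial datum (q₀, 2), respectively (q̃₀, 2). Then q(t) < q̃(t) for all t ≥ 0. -/
open Real Set Filter MeasureTheory
open scoped Topology

/-- The potential `g` from the Hamiltonian `H(x,p) = p²/2 + g(x)`. -/
noncomputable def g (x : ℝ) : ℝ := if |x| ≤ 1 then 1 - (1 - x ^ 2) ^ 4 else 1

/-- The derivative of `g`. -/
noncomputable def g' (x : ℝ) : ℝ := if |x| ≤ 1 then 8 * x * (1 - x ^ 2) ^ 3 else 0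

/-- `(q, p)` is a (global) solution of the Hamiltonian system (HS): `q̇ = p`, `ṗ = -g'(q)`. -/
def IsHSSol (q p : ℝ → ℝ) : Prop :=
  (∀ t : ℝ, HasDerivAt q (p t) t) ∧ (∀ t : ℝ, HasDerivAt p (-(g' (q t))) t)

/-- `F` is the flow of (HS): `F t q₀ p₀ = (q t, p t)` for the solution with data `(q₀, p₀)`. -/
def IsHSFlow (F : ℝ → ℝ → ℝ → ℝ × ℝ) : Prop :=
  ∀ q₀ p₀ : ℝ,
    IsHSSol (fun t => (F t q₀ p₀).1) (fun t => (F t q₀ p₀).2) ∧ F 0 q₀ p₀ = (q₀, p₀)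

/-- The set `([0,∞) × {2}) ∪ ({0} × (0,2])`, codomain of the map `Δ`. -/
def Dset : Set (ℝ × ℝ) := (Ici (0:ℝ) ×ˢ ({2} : Set ℝ)) ∪ ({(0:ℝ)} ×ˢ Ioc (0:ℝ) 2)

/-- `T` is the smallest positive period of `q`. -/
def IsSmallestPeriod (q : ℝ → ℝ) (T : ℝ) : Prop :=
  0 < T ∧ Function.Periodic q T ∧ ∀ T' : ℝ, 0 < T' → Function.Periodic q T' → T ≤ T'

/-- `T` is the period map `𝒯`, assigning to `p₀ ∈ (0, √2)` the smallest positive period of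
the `q`-component of the solution of (HS) with initial datum `(0, p₀)`. -/
def IsPeriodMap (F : ℝ → ℝ → ℝ → ℝ × ℝ) (T : ℝ → ℝ) : Prop :=
  ∀ p₀ ∈ Ioo (0:ℝ) (Real.sqrt 2), IsSmallestPeriod (fun t => (F t 0 p₀).1) (T p₀)

/-- `Δ` associates to `(t,x)` the datum in `Dset` whose orbit stays positive on `(0,t)`
and reaches `x` at time `t`. -/
def IsDeltaMap (F : ℝ → ℝ → ℝ → ℝ × ℝ) (Δ : ℝ → ℝ → ℝ × ℝ) : Prop :=
  ∀ t x : ℝ, 0 < t → 0 < x →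
    Δ t x ∈ Dset ∧ (F t (Δ t x).1 (Δ t x).2).1 = x ∧
      ∀ s ∈ Ioo (0:ℝ) t, 0 < (F s (Δ t x).1 (Δ t x).2).1

/-- The solution `u` of the conservation law built from the flow `F` and the map `Δ`
(extended by `0` at `x = 0`). -/
noncomputable def usol (F : ℝ → ℝ → ℝ → ℝ × ℝ) (Δ : ℝ → ℝ → ℝ × ℝ) (t x : ℝ) : ℝ :=
  if 0 < x then (F t (Δ t x).1 (Δ t x).2).2
  else if x < 0 then -(F t (Δ t (-x)).1 (Δ t (-x)).2).2
  else 0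

/-!
The energy `E = p² / 2 + V(q)` is conserved. If it exceeds every value of `V`, the velocity keeps
its sign, so a solution moving to the right solves the first-order equation `q̇ = √(2 (E - V(q)))`,
whose right-hand side is continuous, positive and increasing in `E`. Let `P` be an antiderivative of
the reciprocal of this right-hand side for the smaller of two energies. Then `P` grows at unit speed
along the motion of smaller energy and at least at unit speed along the other one, so the latter
stays ahead if it starts ahead. For the potential `g`, equal initial velocities and `0 ≤ q₀ < q̃₀`
give ordered energies since `g` increases on `[0, ∞)`.
-/

lemma lt_of_hasDerivWithinAt_le_of_le_hasDerivWithinAt {f u v u' v' : ℝ → ℝ} {s : Set ℝ} {a t : ℝ}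
    (hs : Convex ℝ s) (hf : Continuous f) (hf_pos : ∀ x, 0 < f x)
    (hu : ∀ r ∈ s, HasDerivWithinAt u (u' r) s r) (hu_le : ∀ r ∈ s, u' r ≤ f (u r))
    (hv : ∀ r ∈ s, HasDerivWithinAt v (v' r) s r) (hv_ge : ∀ r ∈ s, f (v r) ≤ v' r)
    (ha : a ∈ s) (ht : t ∈ s) (hat : a ≤ t) (huv : u a < v a) : u t < v t := by
  let P : ℝ → ℝ := fun x => ∫ y in (0)..x, (f y)⁻¹
  have hP (x : ℝ) : HasDerivAt P (f x)⁻¹ x :=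
    ((hf.inv₀ fun y => (hf_pos y).ne').integral_hasStrictDerivAt 0 x).hasDerivAt
  have hP_mono : StrictMono P := strictMono_of_hasDerivAt_pos hP fun x => inv_pos.2 (hf_pos x)
  have hgap (r : ℝ) (hr : r ∈ s) : HasDerivWithinAt (fun r => P (v r) - P (u r))
      ((f (v r))⁻¹ * v' r - (f (u r))⁻¹ * u' r) s r :=
    ((hP (v r)).comp_hasDerivWithinAt r (hv r hr)).sub
      ((hP (u r)).comp_hasDerivWithinAt r (hu r hr))
  have hgap_mono : MonotoneOn (fun r => P (v r) - P (u r)) s := by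
    refine monotoneOn_of_hasDerivWithinAt_nonneg hs (fun r hr => (hgap r hr).continuousWithinAt)
      (fun r hr => (hgap r (interior_subset hr)).mono interior_subset) fun r hr => ?_
    have hu_speed : (f (u r))⁻¹ * u' r ≤ 1 :=
      (inv_mul_le_one₀ (hf_pos _)).2 (hu_le r (interior_subset hr))
    have hv_speed : 1 ≤ (f (v r))⁻¹ * v' r :=
      (one_le_inv_mul₀ (hf_pos _)).2 (hv_ge r (interior_subset hr))
    linarith
  have hgap_pos : 0 < P (v t) - P (u t) :=
    (sub_pos.2 (hP_mono huv)).trans_le (hgap_mono ha ht hat)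
  exact hP_mono.lt_iff_lt.1 (sub_pos.1 hgap_pos)

section NewtonEquation

/-- Global solutions, with position `q` and velocity `p`, of Newton's equation `q̈ = -V'(q)` for a
unit mass on the line. The derivative `V'` of the potential is the parameter, so that `IsHSSol` is
the case `V' = g'`. -/
structure IsNewtonSol (V' q p : ℝ → ℝ) : Prop where
  hasDerivAt_position (t : ℝ) : HasDerivAt q (p t) t
  hasDerivAt_velocity (t : ℝ) : HasDerivAt p (-(V' (q t))) t

/-- The energy of a unit mass at position `x` with velocity `y` in the potential `V`; it is the
conserved quantity of Newton's equation. -/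
noncomputable def energy (V : ℝ → ℝ) (x y : ℝ) : ℝ := y ^ 2 / 2 + V x

variable {V V' q p qt pt : ℝ → ℝ}

namespace IsNewtonSol

lemma energy_eq (h : IsNewtonSol V' q p) (hV : ∀ x, HasDerivAt V (V' x) x) (s t : ℝ) :
    energy V (q s) (p s) = energy V (q t) (p t) := by
  have hderiv (r : ℝ) : HasDerivAt (fun r => energy V (q r) (p r)) 0 r :=
    ((((h.hasDerivAt_velocity r).pow 2).div_const 2).add
      ((hV (q r)).comp r (h.hasDerivAt_position r))).congr_deriv (by push_cast; ring)
  exact is_const_of_deriv_eq_zero (fun r => (hderiv r).differentiableAt)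
    (fun r => (hderiv r).deriv) s t

lemma velocity_ne_zero (h : IsNewtonSol V' q p) (hV : ∀ x, HasDerivAt V (V' x) x)
    (hE : ∀ x, V x < energy V (q 0) (p 0)) (t : ℝ) : p t ≠ 0 := by
  intro hpt
  have hEt : V (q t) < energy V (q t) (p t) := h.energy_eq hV 0 t ▸ hE (q t)
  simp [energy, hpt] at hEt

lemma velocity_pos (h : IsNewtonSol V' q p) (hV : ∀ x, HasDerivAt V (V' x) x)
    (hE : ∀ x, V x < energy V (q 0) (p 0)) (hp : 0 < p 0) (t : ℝ) : 0 < p t := by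
  by_contra! hpt
  have hp_cont : Continuous p :=
    continuous_iff_continuousAt.2 fun r => (h.hasDerivAt_velocity r).continuousAt
  obtain ⟨r, hr⟩ := mem_range_of_exists_le_of_exists_ge hp_cont ⟨t, hpt⟩ ⟨0, hp.le⟩
  exact h.velocity_ne_zero hV hE r hr

lemma velocity_eq_sqrt (h : IsNewtonSol V' q p) (hV : ∀ x, HasDerivAt V (V' x) x)
    (hE : ∀ x, V x < energy V (q 0) (p 0)) (hp : 0 < p 0) (t : ℝ) :
    p t = √(2 * (energy V (q 0) (p 0) - V (q t))) := by
  rw [h.energy_eq hV 0 t, energy, add_sub_cancel_right, mul_div_cancel₀ _ two_ne_zero,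
    Real.sqrt_sq (h.velocity_pos hV hE hp t).le]

end IsNewtonSol

theorem stmt_2_general (hV : ∀ x, HasDerivAt V (V' x) x)
    (hsol : IsNewtonSol V' q p) (hsolt : IsNewtonSol V' qt pt) (hp : 0 < p 0) (hpt : 0 < pt 0)
    (hE : ∀ x, V x < energy V (q 0) (p 0))
    (hEt : energy V (q 0) (p 0) ≤ energy V (qt 0) (pt 0)) (hq : q 0 < qt 0) {t : ℝ}
    (ht : 0 ≤ t) : q t < qt t := by
  have hV_cont : Continuous V := continuous_iff_continuousAt.2 fun x => (hV x).continuousAt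
  refine lt_of_hasDerivWithinAt_le_of_le_hasDerivWithinAt convex_univ
    (f := fun x => √(2 * (energy V (q 0) (p 0) - V x))) (by fun_prop)
    (fun x => Real.sqrt_pos.2 (mul_pos two_pos (sub_pos.2 (hE x))))
    (fun r _ => (hsol.hasDerivAt_position r).hasDerivWithinAt)
    (fun r _ => (hsol.velocity_eq_sqrt hV hE hp r).le)
    (fun r _ => (hsolt.hasDerivAt_position r).hasDerivWithinAt) (fun r _ => ?_)
    (mem_univ 0) (mem_univ t) ht hq
  rw [hsolt.velocity_eq_sqrt hV (fun x => (hE x).trans_le hEt) hpt r]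
  gcongr

end NewtonEquation

lemma hasDerivAt_max_zero_pow (n : ℕ) (y : ℝ) :
    HasDerivAt (fun y : ℝ => max y 0 ^ (n + 2)) ((n + 2 : ℕ) * max y 0 ^ (n + 1)) y := by
  refine hasDerivAt_of_hasDerivAt_of_ne' (x := 0)
    (g := fun y : ℝ => (n + 2 : ℕ) * max y 0 ^ (n + 1)) (fun y hy => ?_)
    (by fun_prop) (by fun_prop) y
  rcases hy.lt_or_gt with hneg | hpos
  · have hzero : (fun y : ℝ => max y 0 ^ (n + 2)) =ᶠ[𝓝 y] fun _ => 0 := by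
      filter_upwards [gt_mem_nhds hneg] with z hz
      simp [max_eq_right hz.le]
    simpa [max_eq_right hneg.le] using (hasDerivAt_const y (0 : ℝ)).congr_of_eventuallyEq hzero
  · have hpow : (fun y : ℝ => max y 0 ^ (n + 2)) =ᶠ[𝓝 y] fun y => y ^ (n + 2) := by
      filter_upwards [lt_mem_nhds hpos] with z hz
      rw [max_eq_left hz.le]
    simpa [max_eq_left hpos.le] using (hasDerivAt_pow (n + 2) y).congr_of_eventuallyEq hpow

lemma max_one_sub_sq_zero (x : ℝ) : max (1 - x ^ 2) 0 = if |x| ≤ 1 then 1 - x ^ 2 else 0 := by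
  split_ifs with hx
  · exact max_eq_left (sub_nonneg.2 ((sq_le_one_iff_abs_le_one x).2 hx))
  · exact max_eq_right (sub_nonpos.2 ((one_lt_sq_iff_one_lt_abs x).2 (not_le.1 hx)).le)

lemma g_eq_one_sub_max_pow (x : ℝ) : g x = 1 - max (1 - x ^ 2) 0 ^ 4 := by
  rw [max_one_sub_sq_zero, g]
  split_ifs <;> simp

lemma g'_eq_mul_max_pow (x : ℝ) : g' x = 8 * x * max (1 - x ^ 2) 0 ^ 3 := by
  rw [max_one_sub_sq_zero, g']
  split_ifs <;> simp

lemma hasDerivAt_g (x : ℝ) : HasDerivAt g (g' x) x := by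
  have hinner : HasDerivAt (fun x : ℝ => 1 - x ^ 2) (-(2 * x)) x := by
    simpa using (hasDerivAt_pow 2 x).const_sub 1
  rw [funext g_eq_one_sub_max_pow, g'_eq_mul_max_pow]
  refine (((hasDerivAt_max_zero_pow 2 (1 - x ^ 2)).comp x hinner).const_sub 1).congr_deriv ?_
  push_cast
  ring

lemma g_nonneg (x : ℝ) : 0 ≤ g x := by
  rw [g_eq_one_sub_max_pow, sub_nonneg]
  exact pow_le_one₀ (le_max_right _ _) (max_le (sub_le_self _ (sq_nonneg x)) zero_le_one)

lemma g_le_one (x : ℝ) : g x ≤ 1 := by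
  rw [g_eq_one_sub_max_pow]
  exact sub_le_self _ (by positivity)

lemma monotoneOn_g : MonotoneOn g (Ici 0) := by
  intro x (hx : 0 ≤ x) y _ hxy
  rw [g_eq_one_sub_max_pow, g_eq_one_sub_max_pow]
  gcongr

lemma g_lt_energy_g {v : ℝ} (hv : 2 < v ^ 2) (x y : ℝ) : g x < energy g y v := by
  rw [energy]
  linarith [g_le_one x, g_nonneg y]

lemma monotoneOn_energy_g (v : ℝ) : MonotoneOn (fun x => energy g x v) (Ici 0) :=
  monotoneOn_g.const_add (v ^ 2 / 2)

/-- Lemma ce2: for `0 ≤ q₀ < q̃₀`, the solutions of (HS) with data `(q₀, 2)` and `(q̃₀, 2)`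
satisfy `q(t) < q̃(t)` for all `t ≥ 0`. -/
theorem stmt_2 (q₀ qt₀ : ℝ) (hq₀ : 0 ≤ q₀) (hlt : q₀ < qt₀)
    (q p qt pt : ℝ → ℝ)
    (hsol : IsHSSol q p) (hq0 : q 0 = q₀) (hp0 : p 0 = 2)
    (hsolt : IsHSSol qt pt) (hqt0 : qt 0 = qt₀) (hpt0 : pt 0 = 2) :
    ∀ t : ℝ, 0 ≤ t → q t < qt t := by
  subst hq0 hqt0
  intro t ht
  have hE (x : ℝ) : g x < energy g (q 0) (p 0) := g_lt_energy_g (by norm_num [hp0]) x (q 0)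
  have hEt : energy g (q 0) (p 0) ≤ energy g (qt 0) (pt 0) := by
    rw [hp0, hpt0]
    exact monotoneOn_energy_g 2 hq₀ (hq₀.trans hlt.le) hlt.le
  exact stmt_2_general hasDerivAt_g ⟨hsol.1, hsol.2⟩ ⟨hsolt.1, hsolt.2⟩ (by simp [hp0])
    (by simp [hpt0]) hE hEt hlt ht
end

section
/- The period map 𝒯 : (0, √2) → (0, +∞), assigning to p₀ the smallest positive period of the q-component of the solution of (HS) starting from (0, p₀), is increasing and continuous, and 𝒯(p₀) → +∞ as p₀ → √2 from the left. -/
open Real Set Filter MeasureTheory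
open scoped Topology

/-!
Put `u = 1 - q²`. On the well `|q| < 1` the potential is `g q = 1 - u⁴ = q² (1 + u + u² + u³)`, so
`y = q √(2 (1 + u + u² + u³))` is a coordinate with `g q = y² / 2`. In it the orbit through
`(0, p₀)` is the circle `y = p₀ sin θ`, `p = p₀ cos θ`, run through with time differential
`dt = w (p₀ sin θ) dθ`, where `w = dq/dy = √(2 (1 + u + u² + u³)) / (8 u³)`. Hence
`𝒯 p₀ = ∫ θ in 0..2π, w (p₀ sin θ)`. Since `w` is continuous and strictly increasing in `|y|`, the
period is continuous and strictly increasing. Since `w y ≥ c / √(2 - y²)`, which on the limiting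
circle has the non-integrable singularity `1 / |cos θ|`, the period diverges as `p₀ → √2`.
-/

section Calculus

variable {φ τ : ℝ → ℝ} {c : ℝ}

lemma strictMono_integral_of_pos (hφ : Continuous φ) (hpos : ∀ s, 0 < φ s) :
    StrictMono fun θ => ∫ s in (0 : ℝ)..θ, φ s :=
  strictMono_of_hasDerivAt_pos (fun θ => (hφ.integral_hasStrictDerivAt 0 θ).hasDerivAt) hpos

lemma surjective_integral_of_periodic_of_pos (hφ : Continuous φ) (hpos : ∀ s, 0 < φ s)
    (hper : Function.Periodic φ c) (hc : 0 < c) :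
    Function.Surjective fun θ => ∫ s in (0 : ℝ)..θ, φ s := by
  have hint : ∀ a b, IntervalIntegrable φ volume a b := fun a b => hφ.intervalIntegrable a b
  exact (intervalIntegral.continuous_primitive hint 0).surjective
    (hper.tendsto_atTop_intervalIntegral_of_pos' (hint 0 c) hpos hc)
    (hper.tendsto_atBot_intervalIntegral_of_pos' (hint 0 c) hpos hc)

lemma exists_inverse_hasDerivAt (hτ : ∀ θ, HasDerivAt τ (φ θ) θ) (hpos : ∀ θ, 0 < φ θ)
    (hsurj : Function.Surjective τ) :
    ∃ σ : ℝ → ℝ, Function.LeftInverse σ τ ∧ ∀ t, HasDerivAt σ (φ (σ t))⁻¹ t := by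
  let e : ℝ ≃o ℝ := (strictMono_of_hasDerivAt_pos hτ hpos).orderIsoOfSurjective τ hsurj
  exact ⟨e.symm, e.symm_apply_apply, fun t =>
    .of_local_left_inverse e.symm.continuous.continuousAt (hτ _) (hpos _).ne'
      (.of_forall e.apply_symm_apply)⟩

lemma periodic_of_hasDerivAt {E : Type*} [NormedAddCommGroup E] [NormedSpace ℝ E] {q p : ℝ → E}
    (hq : ∀ t, HasDerivAt q (p t) t) (hper : Function.Periodic q c) : Function.Periodic p c := by
  intro t
  have hshift : HasDerivAt (fun s => q (s + c)) (p (t + c)) t := (hq (t + c)).comp_add_const t c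
  rw [funext hper] at hshift
  exact hshift.unique (hq t)

lemma lipschitzWith_IccExtend {α : Type*} [PseudoEMetricSpace α] {f : ℝ → α} {K : NNReal}
    {a b : ℝ} (hab : a ≤ b) (hf : LipschitzOnWith K f (Icc a b)) :
    LipschitzWith K (IccExtend hab ((Icc a b).domRestrict f)) :=
  (hf.to_restrict.comp (LipschitzWith.projIcc hab)).weaken (mul_one K).le

end Calculus

lemma IsSmallestPeriod.unique {q : ℝ → ℝ} {T T' : ℝ} (hT : IsSmallestPeriod q T)
    (hT' : IsSmallestPeriod q T') : T = T' :=
  le_antisymm (hT.2.2 T' hT'.1 hT'.2.1) (hT'.2.2 T hT.1 hT.2.1)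

section TravelTime

variable {w : ℝ → ℝ} {R p θ c : ℝ}

/-- The time needed to reach the angle `θ` from the angle `0` on the circular arc
`s ↦ (p sin s, p cos s)` when time runs at the rate `dt = w (p sin s) ds`. -/
noncomputable def travelTime (w : ℝ → ℝ) (p θ : ℝ) : ℝ := ∫ s in (0 : ℝ)..θ, w (p * sin s)

lemma Ico_subset_Ioo_neg : Ico 0 R ⊆ Ioo (-R) R := fun _ hx =>
  ⟨by linarith [hx.1, hx.2], hx.2⟩

lemma mul_sin_mem_Ioo (hp : p ∈ Ioo (-R) R) (s : ℝ) : p * sin s ∈ Ioo (-R) R := by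
  rw [mem_Ioo, ← abs_lt] at hp ⊢
  calc |p * sin s| = |p| * |sin s| := abs_mul _ _
    _ ≤ |p| := mul_le_of_le_one_right (abs_nonneg p) (abs_sin_le_one s)
    _ < R := hp

lemma continuous_comp_mul_sin (hw : ContinuousOn w (Ioo (-R) R)) (hp : p ∈ Ioo (-R) R) :
    Continuous fun s => w (p * sin s) :=
  hw.comp_continuous (by fun_prop) (mul_sin_mem_Ioo hp)

lemma hasDerivAt_travelTime (hw : ContinuousOn w (Ioo (-R) R)) (hp : p ∈ Ioo (-R) R) (θ : ℝ) :
    HasDerivAt (travelTime w p) (w (p * sin θ)) θ :=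
  ((continuous_comp_mul_sin hw hp).integral_hasStrictDerivAt 0 θ).hasDerivAt

lemma travelTime_zero (w : ℝ → ℝ) (p : ℝ) : travelTime w p 0 = 0 :=
  intervalIntegral.integral_same

lemma periodic_comp_mul_sin (w : ℝ → ℝ) (p : ℝ) :
    Function.Periodic (fun s => w (p * sin s)) (2 * π) :=
  (sin_periodic.comp fun x => w (p * x) :)

lemma travelTime_add_two_pi (hw : ContinuousOn w (Ioo (-R) R)) (hp : p ∈ Ioo (-R) R) (θ : ℝ) :
    travelTime w p (θ + 2 * π) = travelTime w p θ + travelTime w p (2 * π) := by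
  simpa [travelTime] using (periodic_comp_mul_sin w p).intervalIntegral_add_eq_add 0 θ
    fun a b => (continuous_comp_mul_sin hw hp).intervalIntegrable a b

lemma strictMono_travelTime (hw : ContinuousOn w (Ioo (-R) R)) (hpos : ∀ y ∈ Ioo (-R) R, 0 < w y)
    (hp : p ∈ Ioo (-R) R) : StrictMono (travelTime w p) :=
  strictMono_integral_of_pos (continuous_comp_mul_sin hw hp) fun s =>
    hpos _ (mul_sin_mem_Ioo hp s)

lemma surjective_travelTime (hw : ContinuousOn w (Ioo (-R) R)) (hpos : ∀ y ∈ Ioo (-R) R, 0 < w y)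
    (hp : p ∈ Ioo (-R) R) : Function.Surjective (travelTime w p) :=
  surjective_integral_of_periodic_of_pos (continuous_comp_mul_sin hw hp)
    (fun s => hpos _ (mul_sin_mem_Ioo hp s)) (periodic_comp_mul_sin w p) two_pi_pos

lemma continuousOn_travelTime (hw : ContinuousOn w (Ioo (-R) R)) (θ : ℝ) :
    ContinuousOn (fun p => travelTime w p θ) (Ioo (-R) R) := by
  rw [continuousOn_iff_continuous_domRestrict]
  exact intervalIntegral.continuous_parametric_intervalIntegral_of_continuous'
    (f := fun (p : Ioo (-R) R) s => w (p * sin s))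
    (hw.comp_continuous (by fun_prop) fun z => mul_sin_mem_Ioo z.1.2 z.2) 0 θ

lemma strictMonoOn_travelTime (hw : ContinuousOn w (Ioo (-R) R))
    (hlt : ∀ ⦃y z⦄, |y| < |z| → |z| < R → w y < w z) (hθ : 0 < θ) :
    StrictMonoOn (fun p => travelTime w p θ) (Ico 0 R) := by
  intro a ha b hb hab
  have haR := Ico_subset_Ioo_neg ha
  have hbR := Ico_subset_Ioo_neg hb
  have speed_lt : ∀ s, sin s ≠ 0 → w (a * sin s) < w (b * sin s) := by
    refine fun s hs => hlt ?_ (abs_lt.2 (mul_sin_mem_Ioo hbR s))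
    rw [abs_mul, abs_mul, abs_of_nonneg ha.1, abs_of_nonneg hb.1]
    exact mul_lt_mul_of_pos_right hab (abs_pos.2 hs)
  refine intervalIntegral.integral_lt_integral_of_continuousOn_of_le_of_exists_lt hθ
    (continuous_comp_mul_sin hw haR).continuousOn
    (continuous_comp_mul_sin hw hbR).continuousOn (fun s _ => ?_)
    ⟨min θ (π / 2), ⟨by positivity, min_le_left _ _⟩, speed_lt _ ?_⟩
  · by_cases hs : sin s = 0
    · simp [hs]
    · exact (speed_lt s hs).le
  · exact (sin_pos_of_pos_of_lt_pi (by positivity)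
      ((min_le_right _ _).trans_lt (half_lt_self pi_pos))).ne'

lemma sqrt_sq_sub_mul_sin_sq_le (hp : p ∈ Ico 0 R) {s : ℝ} (hs : s ∈ Icc 0 (π / 2)) :
    √(R ^ 2 - (p * sin s) ^ 2) ≤ √(R ^ 2 - p ^ 2) + R * (π / 2) - R * s := by
  have hcos : 0 ≤ cos s := cos_nonneg_of_mem_Icc ⟨by linarith [hs.1, pi_pos], hs.2⟩
  have hcos_le : cos s ≤ π / 2 - s := by
    rw [← sin_pi_div_two_sub]
    exact sin_le (by linarith [hs.2])
  have hR : 0 ≤ R ^ 2 - p ^ 2 := sub_nonneg.2 (pow_le_pow_left₀ hp.1 hp.2.le 2)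
  calc √(R ^ 2 - (p * sin s) ^ 2) ≤ √(R ^ 2 - p ^ 2) + p * cos s := by
        refine sqrt_le_iff.2 ⟨add_nonneg (sqrt_nonneg _) (mul_nonneg hp.1 hcos), ?_⟩
        have hcross := mul_nonneg (sqrt_nonneg (R ^ 2 - p ^ 2)) (mul_nonneg hp.1 hcos)
        linear_combination 2 * hcross - p ^ 2 * sin_sq_add_cos_sq s - sq_sqrt hR
    _ ≤ √(R ^ 2 - p ^ 2) + R * (π / 2 - s) := by gcongr; exacts [hp.1.trans hp.2.le, hp.2.le]
    _ = √(R ^ 2 - p ^ 2) + R * (π / 2) - R * s := by ring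

lemma integral_inv_add_sub_mul {ε a b : ℝ} (hε : 0 < ε) (ha : 0 < a) (hb : 0 ≤ b) :
    ∫ s in (0 : ℝ)..b, (ε + a * b - a * s)⁻¹ = a⁻¹ * log (1 + a * b / ε) := by
  rw [intervalIntegral.integral_comp_sub_mul (fun x => x⁻¹) ha.ne',
    integral_inv_of_pos (by linarith) (by nlinarith), smul_eq_mul]
  congr 2
  rw [mul_zero, sub_zero, add_sub_cancel_right, add_div, div_self hε.ne']

lemma log_le_travelTime (hw : ContinuousOn w (Ioo (-R) R)) (hc : 0 ≤ c)
    (hle : ∀ y ∈ Ioo (-R) R, c ≤ w y * √(R ^ 2 - y ^ 2)) (hp : p ∈ Ico 0 R) :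
    c * (R⁻¹ * log (1 + R * (π / 2) / √(R ^ 2 - p ^ 2))) ≤ travelTime w p (π / 2) := by
  have hR : 0 < R := hp.1.trans_lt hp.2
  have hpR := Ico_subset_Ioo_neg hp
  have hroot : ∀ y ∈ Ioo (-R) R, 0 < √(R ^ 2 - y ^ 2) := fun y hy =>
    sqrt_pos.2 (sub_pos.2 (sq_lt_sq' hy.1 hy.2))
  have hdenom : ∀ s ∈ Icc 0 (π / 2), 0 < √(R ^ 2 - p ^ 2) + R * (π / 2) - R * s := fun s hs =>
    (hroot _ (mul_sin_mem_Ioo hpR s)).trans_le (sqrt_sq_sub_mul_sin_sq_le hp hs)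
  have hcont : ContinuousOn (fun s => c * (√(R ^ 2 - p ^ 2) + R * (π / 2) - R * s)⁻¹)
      (uIcc 0 (π / 2)) := by
    rw [uIcc_of_le pi_div_two_pos.le]
    exact continuousOn_const.mul (.inv₀ (by fun_prop) fun s hs => (hdenom s hs).ne')
  rw [← integral_inv_add_sub_mul (hroot p hpR) hR pi_div_two_pos.le,
    ← intervalIntegral.integral_const_mul]
  refine intervalIntegral.integral_mono_on pi_div_two_pos.le hcont.intervalIntegrable
    ((continuous_comp_mul_sin hw hpR).intervalIntegrable _ _) fun s hs => ?_
  have hsin := mul_sin_mem_Ioo hpR s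
  calc c * (√(R ^ 2 - p ^ 2) + R * (π / 2) - R * s)⁻¹
      ≤ c * (√(R ^ 2 - (p * sin s) ^ 2))⁻¹ := by
        gcongr
        exacts [hroot _ hsin, sqrt_sq_sub_mul_sin_sq_le hp hs]
    _ ≤ w (p * sin s) := (mul_inv_le_iff₀ (hroot _ hsin)).2 (hle _ hsin)

lemma tendsto_sqrt_sq_sub_sq (hR : 0 < R) :
    Tendsto (fun p => √(R ^ 2 - p ^ 2)) (𝓝[<] R) (𝓝[>] 0) := by
  refine tendsto_nhdsWithin_iff.2 ⟨?_, ?_⟩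
  · have hcont : Continuous fun p : ℝ => √(R ^ 2 - p ^ 2) := by fun_prop
    simpa using (hcont.tendsto R).mono_left nhdsWithin_le_nhds
  · filter_upwards [Ioo_mem_nhdsLT hR] with p hp
    exact sqrt_pos.2 (sub_pos.2 (pow_lt_pow_left₀ hp.2 hp.1.le two_ne_zero))

lemma tendsto_travelTime_atTop (hw : ContinuousOn w (Ioo (-R) R)) (hR : 0 < R) (hc : 0 < c)
    (hle : ∀ y ∈ Ioo (-R) R, c ≤ w y * √(R ^ 2 - y ^ 2)) (hθ : π / 2 ≤ θ) :
    Tendsto (fun p => travelTime w p θ) (𝓝[<] R) atTop := by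
  have hpos : ∀ y ∈ Ioo (-R) R, 0 < w y := fun y hy =>
    pos_of_mul_pos_left (hc.trans_le (hle y hy)) (sqrt_nonneg _)
  have hlog : Tendsto (fun p => c * (R⁻¹ * log (1 + R * (π / 2) / √(R ^ 2 - p ^ 2))))
      (𝓝[<] R) atTop :=
    ((tendsto_log_atTop.comp (tendsto_const_nhds.add_atTop
      ((tendsto_sqrt_sq_sub_sq hR).inv_tendsto_nhdsGT_zero.const_mul_atTop
        (mul_pos hR pi_div_two_pos)))).const_mul_atTop (inv_pos.2 hR)).const_mul_atTop hc
  refine tendsto_atTop_mono' _ ?_ hlog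
  filter_upwards [Ioo_mem_nhdsLT hR] with p hp
  exact (log_le_travelTime hw hc.le hle ⟨hp.1.le, hp.2⟩).trans
    ((strictMono_travelTime hw hpos (Ico_subset_Ioo_neg ⟨hp.1.le, hp.2⟩)).monotone hθ)

end TravelTime

section Newton

variable {f q p q₁ p₁ q₂ p₂ h w : ℝ → ℝ} {R a : ℝ} {K : NNReal}

/-- `(q, p)` is a global solution of Newton's equation `q̇ = p`, `ṗ = -f q`; the system (HS) is
the case `f = g'`. -/
def IsNewtonSol_s6 (f q p : ℝ → ℝ) : Prop :=
  (∀ t, HasDerivAt q (p t) t) ∧ ∀ t, HasDerivAt p (-f (q t)) t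

lemma IsHSSol.isNewtonSol (hsol : IsHSSol q p) : IsNewtonSol_s6 g' q p := hsol

lemma IsNewtonSol_s6.unique (hf : LipschitzWith K f) (h₁ : IsNewtonSol_s6 f q₁ p₁)
    (h₂ : IsNewtonSol_s6 f q₂ p₂) (hq : q₁ 0 = q₂ 0) (hp : p₁ 0 = p₂ 0) : q₁ = q₂ ∧ p₁ = p₂ := by
  have hfield : LipschitzWith (max 1 K) fun z : ℝ × ℝ => (z.2, -f z.1) := by
    simpa using LipschitzWith.prod_snd.prodMk (hf.comp LipschitzWith.prod_fst).neg
  have heq : (fun t => (q₁ t, p₁ t)) = fun t => (q₂ t, p₂ t) :=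
    ODE_solution_unique_univ (v := fun _ z => (z.2, -f z.1)) (s := fun _ => univ) (t₀ := 0)
      (fun _ => hfield.lipschitzOnWith)
      (fun t => ⟨(h₁.1 t).prodMk (h₁.2 t), mem_univ _⟩)
      (fun t => ⟨(h₂.1 t).prodMk (h₂.2 t), mem_univ _⟩)
      (Prod.ext hq hp)
  exact ⟨funext fun t => congrArg Prod.fst (congrFun heq t),
    funext fun t => congrArg Prod.snd (congrFun heq t)⟩

/-- `h : (-R, R) → ℝ` with derivative `w` parametrizes a potential well around `0`, with force
`-f`, in such a way that the potential energy at `h y` is `y² / 2`. The potential itself does not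
appear: `force_mul` is the derivative of that identity. -/
structure IsEnergyChart (f h w : ℝ → ℝ) (R : ℝ) : Prop where
  map_zero : h 0 = 0
  hasDerivAt : ∀ y ∈ Ioo (-R) R, HasDerivAt h (w y) y
  pos : ∀ y ∈ Ioo (-R) R, 0 < w y
  continuousOn : ContinuousOn w (Ioo (-R) R)
  force_mul : ∀ y ∈ Ioo (-R) R, f (h y) * w y = y

namespace IsEnergyChart

lemma isNewtonSol (hchart : IsEnergyChart f h w R) (ha : a ∈ Ioo (-R) R) {σ : ℝ → ℝ}
    (hσ : ∀ t, HasDerivAt σ (w (a * sin (σ t)))⁻¹ t) :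
    IsNewtonSol_s6 f (fun t => h (a * sin (σ t))) (fun t => a * cos (σ t)) := by
  have hmem (t : ℝ) : a * sin (σ t) ∈ Ioo (-R) R := mul_sin_mem_Ioo ha (σ t)
  have hne (t : ℝ) : w (a * sin (σ t)) ≠ 0 := (hchart.pos _ (hmem t)).ne'
  refine ⟨fun t => ?_, fun t => ?_⟩
  · refine ((hchart.hasDerivAt _ (hmem t)).comp t ((hσ t).sin.const_mul a)).congr_deriv ?_
    field_simp [hne t]
  · refine ((hσ t).cos.const_mul a).congr_deriv ?_
    have hforce := hchart.force_mul _ (hmem t)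
    field_simp [hne t]
    linarith

lemma apply_travelTime (hchart : IsEnergyChart f h w R) (hf : LipschitzWith K f)
    (ha : a ∈ Ioo (-R) R) (hsol : IsNewtonSol_s6 f q p) (hq : q 0 = 0) (hp : p 0 = a) (θ : ℝ) :
    q (travelTime w a θ) = h (a * sin θ) ∧ p (travelTime w a θ) = a * cos θ := by
  obtain ⟨σ, hστ, hσ⟩ := exists_inverse_hasDerivAt (hasDerivAt_travelTime hchart.continuousOn ha)
    (fun θ => hchart.pos _ (mul_sin_mem_Ioo ha θ))
    (surjective_travelTime hchart.continuousOn hchart.pos ha)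
  have hσ0 : σ 0 = 0 := by simpa only [travelTime_zero] using hστ 0
  obtain ⟨rfl, rfl⟩ := hsol.unique hf (hchart.isNewtonSol ha hσ)
    (by simp [hσ0, hq, hchart.map_zero]) (by simp [hσ0, hp])
  simp only [hστ θ, and_self]

lemma isSmallestPeriod (hchart : IsEnergyChart f h w R) (hf : LipschitzWith K f)
    (ha : a ∈ Ioo (-R) R) (ha0 : a ≠ 0) (hsol : IsNewtonSol_s6 f q p) (hq : q 0 = 0) (hp : p 0 = a) :
    IsSmallestPeriod q (travelTime w a (2 * π)) := by
  have hmono := strictMono_travelTime hchart.continuousOn hchart.pos ha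
  have hsurj := surjective_travelTime hchart.continuousOn hchart.pos ha
  have horbit := hchart.apply_travelTime hf ha hsol hq hp
  refine ⟨travelTime_zero w a ▸ hmono two_pi_pos, fun t => ?_, fun T hT hper => ?_⟩
  · obtain ⟨θ, rfl⟩ := hsurj t
    rw [← travelTime_add_two_pi hchart.continuousOn ha, (horbit _).1, (horbit _).1,
      sin_add_two_pi]
  · obtain ⟨θ, rfl⟩ := hsurj T
    have hθ : 0 < θ := by rwa [← travelTime_zero w a, hmono.lt_iff_lt] at hT
    have hcos : cos θ = 1 := by
      refine mul_left_cancel₀ ha0 ?_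
      rw [← (horbit θ).2, (periodic_of_hasDerivAt hsol.1 hper).eq, hp, mul_one]
    refine hmono.monotone (le_of_not_gt fun hlt => hθ.ne' ?_)
    exact (cos_eq_one_iff_of_lt_of_lt (by linarith) hlt).1 hcos

end IsEnergyChart

end Newton

section Well

variable {y z : ℝ}

/-- The value of `1 - q²` at the points `q` of the well where `g q = y² / 2`. -/
noncomputable def wellGap (y : ℝ) : ℝ := √(√(1 - y ^ 2 / 2))

/-- The ratio `y / q` at the points `q` of the well where `g q = y² / 2`, found from
`1 - u ^ 4 = (1 - u) * (1 + u + u ^ 2 + u ^ 3)` with `u = 1 - q²`. -/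
noncomputable def wellSlope (y : ℝ) : ℝ :=
  √(2 * (1 + wellGap y + wellGap y ^ 2 + wellGap y ^ 3))

/-- The point `q` of the well that has the sign of `y` and satisfies `g q = y² / 2`. -/
noncomputable def wellPos (y : ℝ) : ℝ := y / wellSlope y

/-- The derivative of `wellPos` on `(-√2, √2)`. -/
noncomputable def wellPosDeriv (y : ℝ) : ℝ := wellSlope y / (8 * wellGap y ^ 3)

lemma wellGap_pos (hy : y ^ 2 < 2) : 0 < wellGap y :=
  sqrt_pos.2 (sqrt_pos.2 (by linarith))

lemma wellGap_le_one (y : ℝ) : wellGap y ≤ 1 := by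
  rw [wellGap, sqrt_le_one, sqrt_le_one]
  linarith [sq_nonneg y]

lemma wellGap_pow_four (hy : y ^ 2 < 2) : wellGap y ^ 4 = 1 - y ^ 2 / 2 := by
  rw [wellGap, pow_mul _ 2 2, sq_sqrt (sqrt_nonneg _), sq_sqrt (by linarith)]

lemma wellGap_lt_wellGap (hyz : |y| < |z|) (hz : z ^ 2 < 2) : wellGap z < wellGap y := by
  refine sqrt_lt_sqrt (sqrt_nonneg _) (sqrt_lt_sqrt (by linarith) ?_)
  linarith [sq_lt_sq.2 hyz]

lemma wellSlope_sq (y : ℝ) :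
    wellSlope y ^ 2 = 2 * (1 + wellGap y + wellGap y ^ 2 + wellGap y ^ 3) :=
  sq_sqrt (by have : 0 ≤ wellGap y := sqrt_nonneg _; positivity)

lemma one_le_wellSlope (y : ℝ) : 1 ≤ wellSlope y := by
  have : 0 ≤ wellGap y := sqrt_nonneg _
  refine le_sqrt_of_sq_le ?_
  linarith [pow_nonneg this 2, pow_nonneg this 3]

lemma wellSlope_pos (y : ℝ) : 0 < wellSlope y := one_pos.trans_le (one_le_wellSlope y)

lemma sq_eq_one_sub_wellGap_mul (hy : y ^ 2 < 2) : y ^ 2 = (1 - wellGap y) * wellSlope y ^ 2 := by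
  rw [wellSlope_sq]
  linear_combination 2 * wellGap_pow_four hy

lemma wellPos_sq (hy : y ^ 2 < 2) : wellPos y ^ 2 = 1 - wellGap y := by
  rw [wellPos, div_pow, div_eq_iff (pow_pos (wellSlope_pos y) 2).ne',
    ← sq_eq_one_sub_wellGap_mul hy]

lemma hasDerivAt_wellGap (hy : y ^ 2 < 2) :
    HasDerivAt wellGap (-y / (4 * wellGap y ^ 3)) y := by
  have hinner : HasDerivAt (fun y : ℝ => 1 - y ^ 2 / 2) (-y) y :=
    (((hasDerivAt_pow 2 y).div_const 2).const_sub 1).congr_deriv (by norm_num)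
  have hroot : 0 < √(1 - y ^ 2 / 2) := sqrt_pos.2 (by linarith)
  have hgap := wellGap_pos hy
  refine HasDerivAt.congr_deriv (f := wellGap)
    ((hinner.sqrt (by linarith)).sqrt hroot.ne') ?_
  rw [← wellGap, ← sq_sqrt hroot.le, ← wellGap]
  field_simp
  norm_num

lemma hasDerivAt_wellSlope (hy : y ^ 2 < 2) :
    HasDerivAt wellSlope
      ((1 + 2 * wellGap y + 3 * wellGap y ^ 2) * (-y / (4 * wellGap y ^ 3)) / wellSlope y) y := by
  have hgap := hasDerivAt_wellGap hy
  have hpos := wellSlope_pos y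
  have hpoly := (((hgap.const_add 1).fun_add (hgap.fun_pow 2)).fun_add (hgap.fun_pow 3)).const_mul 2
  refine HasDerivAt.congr_deriv (f := wellSlope) (hpoly.sqrt (sqrt_pos.1 hpos).ne') ?_
  rw [← wellSlope]
  push_cast
  ring

lemma hasDerivAt_wellPos (hy : y ^ 2 < 2) : HasDerivAt wellPos (wellPosDeriv y) y := by
  have hgap := wellGap_pos hy
  have hslope := wellSlope_pos y
  refine ((hasDerivAt_id' y).fun_div (hasDerivAt_wellSlope hy) hslope.ne').congr_deriv ?_
  rw [wellPosDeriv]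
  field_simp
  linear_combination 8 * (1 + 2 * wellGap y + 3 * wellGap y ^ 2) * sq_eq_one_sub_wellGap_mul hy
    - 4 * wellSlope y ^ 2 * wellSlope_sq y

lemma continuousAt_wellPosDeriv (hy : y ^ 2 < 2) : ContinuousAt wellPosDeriv y :=
  (hasDerivAt_wellSlope hy).continuousAt.div
    (((hasDerivAt_wellGap hy).continuousAt.pow 3).const_mul 8)
    (mul_pos (by norm_num) (pow_pos (wellGap_pos hy) 3)).ne'

lemma wellPosDeriv_pos (hy : y ^ 2 < 2) : 0 < wellPosDeriv y :=
  div_pos (wellSlope_pos y) (mul_pos (by norm_num) (pow_pos (wellGap_pos hy) 3))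

lemma wellPosDeriv_sq (hy : y ^ 2 < 2) :
    wellPosDeriv y ^ 2 = ((wellGap y)⁻¹ ^ 6 + (wellGap y)⁻¹ ^ 5 + (wellGap y)⁻¹ ^ 4
      + (wellGap y)⁻¹ ^ 3) / 32 := by
  have hgap := wellGap_pos hy
  rw [wellPosDeriv, div_pow, wellSlope_sq]
  field_simp
  ring

lemma wellPosDeriv_lt_wellPosDeriv (hyz : |y| < |z|) (hz : z ^ 2 < 2) :
    wellPosDeriv y < wellPosDeriv z := by
  have hy : y ^ 2 < 2 := (sq_lt_sq.2 hyz).trans hz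
  have hy_pos := wellGap_pos hy
  have hz_pos := wellGap_pos hz
  have hgap := wellGap_lt_wellGap hyz hz
  refine lt_of_pow_lt_pow_left₀ 2 (wellPosDeriv_pos hz).le ?_
  rw [wellPosDeriv_sq hy, wellPosDeriv_sq hz]
  gcongr

lemma le_wellPosDeriv_mul_sqrt (hy : y ^ 2 < 2) : 1 / 8 ≤ wellPosDeriv y * √(2 - y ^ 2) := by
  have hgap := wellGap_pos hy
  have hroot : wellGap y ^ 2 ≤ √(2 - y ^ 2) := by
    refine le_sqrt_of_sq_le ?_
    linarith [wellGap_pow_four hy, pow_mul (wellGap y) 2 2]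
  calc (1 : ℝ) / 8 ≤ wellSlope y / (8 * wellGap y) :=
        div_le_div₀ (wellSlope_pos y).le (one_le_wellSlope y) (by positivity)
          (by linarith [wellGap_le_one y])
    _ = wellPosDeriv y * wellGap y ^ 2 := by rw [wellPosDeriv]; field_simp
    _ ≤ wellPosDeriv y * √(2 - y ^ 2) :=
        mul_le_mul_of_nonneg_left hroot (wellPosDeriv_pos hy).le

lemma g'_wellPos_mul (hy : y ^ 2 < 2) : g' (wellPos y) * wellPosDeriv y = y := by
  have hgap := wellGap_pos hy
  have hslope := wellSlope_pos y
  have hsq := wellPos_sq hy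
  have habs : |wellPos y| ≤ 1 := by
    rw [← sq_le_one_iff_abs_le_one, hsq]
    linarith
  rw [g', if_pos habs, hsq, wellPos, wellPosDeriv]
  field_simp
  ring

lemma isEnergyChart_wellPos : IsEnergyChart g' wellPos wellPosDeriv √2 where
  map_zero := zero_div _
  hasDerivAt _ hy := hasDerivAt_wellPos (sq_lt.2 hy)
  pos _ hy := wellPosDeriv_pos (sq_lt.2 hy)
  continuousOn _ hy := (continuousAt_wellPosDeriv (sq_lt.2 hy)).continuousWithinAt
  force_mul _ hy := g'_wellPos_mul (sq_lt.2 hy)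

lemma g'_eq_IccExtend :
    g' = IccExtend (by norm_num : (-1 : ℝ) ≤ 1)
      ((Icc (-1) 1).domRestrict fun x : ℝ => 8 * x * (1 - x ^ 2) ^ 3) := by
  ext x
  rw [g']
  split_ifs with hx
  · rw [IccExtend_of_mem _ _ (abs_le.1 hx), domRestrict_apply]
  · rcases lt_abs.1 (not_le.1 hx) with hx | hx
    · rw [IccExtend_of_right_le _ _ hx.le]
      norm_num
    · rw [IccExtend_of_le_left _ _ (by linarith)]
      norm_num

lemma exists_lipschitzWith_g' : ∃ K, LipschitzWith K g' := by
  have hpoly : ContDiff ℝ 1 fun x : ℝ => 8 * x * (1 - x ^ 2) ^ 3 := by fun_prop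
  obtain ⟨K, hK⟩ := hpoly.contDiffOn.exists_lipschitzOnWith one_ne_zero
    (convex_Icc (-1 : ℝ) 1) isCompact_Icc
  exact ⟨K, g'_eq_IccExtend ▸ lipschitzWith_IccExtend _ hK⟩

lemma IsPeriodMap.eq_travelTime {F : ℝ → ℝ → ℝ → ℝ × ℝ} {T : ℝ → ℝ} (hF : IsHSFlow F)
    (hT : IsPeriodMap F T) {p : ℝ} (hp : p ∈ Ioo 0 √2) :
    T p = travelTime wellPosDeriv p (2 * π) := by
  obtain ⟨K, hK⟩ := exists_lipschitzWith_g'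
  obtain ⟨hsol, hinit⟩ := hF 0 p
  exact (hT p hp).unique (isEnergyChart_wellPos.isSmallestPeriod hK
    (Ico_subset_Ioo_neg (Ioo_subset_Ico_self hp)) hp.1.ne' hsol.isNewtonSol
    (by rw [hinit]) (by rw [hinit]))

end Well

/-- Lemma ce3 (iii), second part: the period map `𝒯 : (0, √2) → (0, +∞)` is increasing and
continuous, and `𝒯(p₀) → +∞` as `p₀ → √2⁻`. -/
theorem stmt_6 (F : ℝ → ℝ → ℝ → ℝ × ℝ) (hF : IsHSFlow F)
    (T : ℝ → ℝ) (hT : IsPeriodMap F T) :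
    StrictMonoOn T (Ioo 0 (Real.sqrt 2)) ∧
    ContinuousOn T (Ioo 0 (Real.sqrt 2)) ∧
    Tendsto T (𝓝[<] (Real.sqrt 2)) atTop := by
  have heq : EqOn (fun p => travelTime wellPosDeriv p (2 * π)) T (Ioo 0 √2) := fun p hp =>
    (hT.eq_travelTime hF hp).symm
  have hcont := isEnergyChart_wellPos.continuousOn
  have hsqrt : 0 < √2 := sqrt_pos.2 two_pos
  refine ⟨?_, ?_, ?_⟩
  · refine ((strictMonoOn_travelTime hcont (fun y z hyz hz => ?_) two_pi_pos).mono
      Ioo_subset_Ico_self).congr heq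
    exact wellPosDeriv_lt_wellPosDeriv hyz (sq_lt.2 (abs_lt.1 hz))
  · exact ((continuousOn_travelTime hcont (2 * π)).mono
      (Ioo_subset_Ico_self.trans Ico_subset_Ioo_neg)).congr heq.symm
  · refine (tendsto_travelTime_atTop hcont hsqrt (by norm_num : (0 : ℝ) < 1 / 8)
      (fun y hy => ?_) (by linarith [pi_pos])).congr'
        (heq.eventuallyEq_of_mem (Ioo_mem_nhdsLT hsqrt))
    rw [sq_sqrt zero_le_two]
    exact le_wellPosDeriv_mul_sqrt (sq_lt.2 hy)
end
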